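/- Wiener–Delsarte bound: for D ⊂ T^n an origin-symmetric convex body, W_n(D) ≤ |D| · A_{R^n}(D). -/

import Mathlib

open MeasureTheory Complex Set
open scoped ENNReal NNReal ComplexOrder Pointwise

noncomputable def eC (t : ℝ) : ℂ := Complex.exp (2 * Real.pi * Complex.I * t)

noncomputable def box (n : ℕ) : Set (Fin n → ℝ) :=
  Set.Icc (fun _ => -(1/2 : ℝ)) (fun _ => (1/2 : ℝ))

def IsPeriodic {n : ℕ} (f : (Fin n → ℝ) → ℂ) : Prop :=
  ∀ (x : Fin n → ℝ) (ν : Fin n → ℤ), f (x + fun i => (ν i : ℝ)) = f x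

/-- The ν-th Fourier coefficient of a 1-periodic function on ℝⁿ (the n-torus),
computed over the fundamental domain `[-1/2,1/2]ⁿ`. -/
noncomputable def fourierCoeffT {n : ℕ} (f : (Fin n → ℝ) → ℂ) (ν : Fin n → ℤ) : ℂ :=
  ∫ x in box n, f x * eC (-(∑ i, (ν i : ℝ) * x i))

/-- The Fourier transform on ℝⁿ. -/
noncomputable def fourierR {n : ℕ} (f : (Fin n → ℝ) → ℂ) (ξ : Fin n → ℝ) : ℂ :=
  ∫ x, f x * eC (-(∑ i, ξ i * x i))

/-- Wiener's sharp constant `W_n(D)`: the smallest constant `C` such that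
`∫_{𝕋ⁿ}|f|² ≤ C |D|⁻¹ ∫_D |f|²` for every periodic integrable `f` with
nonnegative Fourier coefficients. -/
noncomputable def Wconst (n : ℕ) (D : Set (Fin n → ℝ)) : ℝ :=
  sInf {C : ℝ | ∀ f : (Fin n → ℝ) → ℂ, IsPeriodic f → IntegrableOn f (box n) →
    (∀ ν, 0 ≤ fourierCoeffT f ν) →
    ∫⁻ x in box n, (‖f x‖₊ : ℝ≥0∞) ^ 2 ≤
      ENNReal.ofReal C * (volume D)⁻¹ * ∫⁻ x in D, (‖f x‖₊ : ℝ≥0∞) ^ 2}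

/-- Admissibility for the Delsarte (linear programming) problem on `D ⊆ ℝⁿ`:
`h ∈ L¹`, `ĥ ≥ 0` everywhere, `h ≤ 0` outside `D`, `ĥ(0) = 1`. -/
def AdmDel {n : ℕ} (D : Set (Fin n → ℝ)) (h : (Fin n → ℝ) → ℂ) : Prop :=
  Continuous h ∧ Integrable h ∧ (∀ ξ, 0 ≤ fourierR h ξ) ∧
    (∀ x, x ∉ D → h x ≤ 0) ∧ fourierR h 0 = 1

/-- The Delsarte constant `A_{ℝⁿ}(D) = inf h(0)` over admissible `h`. -/
noncomputable def ADel (n : ℕ) (D : Set (Fin n → ℝ)) : ℝ :=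
  sInf {a : ℝ | ∃ h, AdmDel D h ∧ a = (h 0).re}


def tmk {n : ℕ} (x : Fin n → ℝ) : UnitAddTorus (Fin n) := fun i => (x i : UnitAddCircle)

noncomputable def tlift {n : ℕ} (f : (Fin n → ℝ) → ℂ) (θ : UnitAddTorus (Fin n)) : ℂ :=
  f (fun i => (AddCircle.equivIoc 1 (-(1/2 : ℝ)) (θ i)).1)

def ioBox {n : ℕ} (a : Fin n → ℝ) : Set (Fin n → ℝ) := {x | ∀ i, x i ∈ Ioc (a i) (a i + 1)}

lemma tlift_tmk {n : ℕ} {f : (Fin n → ℝ) → ℂ} (hf : IsPeriodic f) (x : Fin n → ℝ) :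
    tlift f (tmk x) = f x := by
  have h : ∀ i, ∃ m : ℤ, (AddCircle.equivIoc 1 (-(1/2 : ℝ)) (tmk x i)).1 = x i + m := by
    intro i
    have h1 : (((AddCircle.equivIoc 1 (-(1/2 : ℝ)) (tmk x i)).1 : ℝ) : UnitAddCircle)
        = (x i : UnitAddCircle) :=
      (AddCircle.equivIoc 1 (-(1/2 : ℝ))).symm_apply_apply (tmk x i)
    rw [← sub_eq_zero, ← AddCircle.coe_sub, AddCircle.coe_eq_zero_iff] at h1
    obtain ⟨m, hm⟩ := h1
    refine ⟨m, ?_⟩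
    simp only [zsmul_eq_mul, mul_one] at hm
    linarith
  choose m hm using h
  unfold tlift
  rw [← hf x m]
  congr 1
  funext i
  exact hm i

lemma measurableSet_ioBox {n : ℕ} (a : Fin n → ℝ) : MeasurableSet (ioBox a) :=
  MeasurableSet.univ_pi' (fun _ => measurableSet_Ioc)

lemma ioBox_ae_box (n : ℕ) : (ioBox (fun _ : Fin n => -(1/2 : ℝ))) =ᵐ[volume] box n := by
  have := Measure.univ_pi_Ioc_ae_eq_Icc (μ := fun _ : Fin n => (volume : Measure ℝ))
    (f := fun _ => -(1/2 : ℝ)) (g := fun _ => (1/2 : ℝ))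
  have e : (ioBox (fun _ : Fin n => -(1/2 : ℝ))) = Set.univ.pi fun _ => Ioc (-(1/2 : ℝ)) (1/2) := by
    ext x
    have : -(1/2:ℝ) + 1 = 1/2 := by norm_num
    simp only [ioBox, this, Set.mem_pi, Set.mem_univ, forall_true_left]
    rfl
  rw [e]; exact this

lemma integral_ioBox {n : ℕ} {f : (Fin n → ℝ) → ℂ} (hf : IsPeriodic f) (a b : Fin n → ℝ) :
    ∫ x in ioBox a, f x = ∫ x in ioBox b, f x := by
  have h1 := (UnitAddTorus.integral_preimage (tlift f) a).symm.trans
    (UnitAddTorus.integral_preimage (tlift f) b)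
  have e : ∀ x : Fin n → ℝ, tlift f (fun i => (x i : UnitAddCircle)) = f x := tlift_tmk hf
  simp only [e] at h1
  exact h1

lemma integral_box {n : ℕ} {f : (Fin n → ℝ) → ℂ} (hf : IsPeriodic f) (a : Fin n → ℝ) :
    ∫ x in box n, f x = ∫ x in ioBox a, f x := by
  rw [← integral_ioBox hf (fun _ => -(1/2 : ℝ)), setIntegral_congr_set (ioBox_ae_box n)]

lemma integrableOn_ioBox_iff {n : ℕ} {f : (Fin n → ℝ) → ℂ} (hf : IsPeriodic f) (a b : Fin n → ℝ) :
    IntegrableOn f (ioBox a) ↔ IntegrableOn f (ioBox b) := by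
  rw [integrableOn_iff_comap_subtypeVal (measurableSet_ioBox a),
    integrableOn_iff_comap_subtypeVal (measurableSet_ioBox b)]
  have key := fun a => (UnitAddTorus.measurePreserving_equivPiIoc a).integrable_comp_emb
    (UnitAddTorus.measurableEquivPiIoc a).measurableEmbedding (g := f ∘ Subtype.val)
  have e : ∀ a, (f ∘ Subtype.val) ∘ (UnitAddTorus.measurableEquivPiIoc a) = tlift f := by
    intro a
    funext θ
    obtain ⟨y, rfl⟩ := (UnitAddTorus.measurableEquivPiIoc a).symm.surjective θ
    simp only [Function.comp_apply, MeasurableEquiv.apply_symm_apply]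
    exact (tlift_tmk hf y.1).symm
  simp only [e] at key
  exact (key a).symm.trans (key b)

lemma integrableOn_ioBox {n : ℕ} {f : (Fin n → ℝ) → ℂ} (hf : IsPeriodic f)
    (hi : IntegrableOn f (box n)) (a : Fin n → ℝ) : IntegrableOn f (ioBox a) := by
  rw [integrableOn_ioBox_iff hf a (fun _ => -(1/2 : ℝ))]
  exact hi.congr_set_ae (ioBox_ae_box n)

lemma locallyIntegrable_of_periodic {n : ℕ} {f : (Fin n → ℝ) → ℂ} (hf : IsPeriodic f)
    (hi : IntegrableOn f (box n)) : LocallyIntegrable f := by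
  intro x
  refine ⟨ioBox (fun i => x i - 1/2), ?_, integrableOn_ioBox hf hi _⟩
  have : ioBox (fun i => x i - 1/2) = Set.univ.pi fun i => Ioc (x i - 1/2) (x i - 1/2 + 1) := by
    ext x; simp [ioBox]
  rw [this]
  exact set_pi_mem_nhds Set.finite_univ fun i _ => Ioc_mem_nhds (by linarith) (by linarith)

lemma box_trans {n : ℕ} {f : (Fin n → ℝ) → ℂ} (hf : IsPeriodic f) (y : Fin n → ℝ) :
    ∫ x in box n, f (x - y) = ∫ x in box n, f x := by
  have hs : IsPeriodic (fun x => f (x - y)) := by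
    intro x ν
    show f _ = f _
    rw [← hf (x - y) ν]; congr 1; abel
  rw [integral_box hf ((fun _ => -(1/2:ℝ)) - y), integral_box hs (fun _ => -(1/2:ℝ)),
    ← integral_indicator (measurableSet_ioBox _), ← integral_indicator (measurableSet_ioBox _),
    ← integral_sub_right_eq_self ((ioBox ((fun _ => -(1/2:ℝ)) - y)).indicator _) y]
  congr 1
  funext x
  simp only [indicator, ioBox, mem_ofPred_eq, Pi.sub_apply, mem_Ioc]
  congr 1
  simp only [eq_iff_iff]
  refine forall_congr' fun i => ?_
  constructor <;> rintro ⟨h1, h2⟩ <;> constructor <;> linarith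

lemma integrableOn_trans {n : ℕ} {f : (Fin n → ℝ) → ℂ} (hf : IsPeriodic f)
    (hi : IntegrableOn f (box n)) (y : Fin n → ℝ) : IntegrableOn (fun x => f (x - y)) (box n) := by
  have h := (locallyIntegrable_of_periodic hf hi).integrableOn_isCompact
    (k := (fun x => x - y) '' box n) (isCompact_Icc.image (by fun_prop))
  have := (measurePreserving_sub_right volume y).integrableOn_image
    (MeasurableEquiv.subRight y).measurableEmbedding (f := f) (s := box n)
  exact this.1 h

lemma tlift_continuous {n : ℕ} {f : (Fin n → ℝ) → ℂ} (hf : IsPeriodic f) (hc : Continuous f) :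
    Continuous (tlift f) := by
  have hq : IsOpenQuotientMap (tmk : (Fin n → ℝ) → UnitAddTorus (Fin n)) :=
    IsOpenQuotientMap.piMap (fun _ => QuotientAddGroup.isOpenQuotientMap_mk)
  rw [← hq.continuous_comp_iff]
  have : tlift f ∘ tmk = f := funext (tlift_tmk hf)
  rwa [this]

lemma eC_periodic {n : ℕ} (ν : Fin n → ℤ) :
    IsPeriodic (fun x : Fin n → ℝ => eC (∑ i, (ν i : ℝ) * x i)) := by
  intro x m
  simp only [eC, Pi.add_apply]
  rw [Complex.exp_eq_exp_iff_exists_int]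
  refine ⟨∑ i, ν i * m i, ?_⟩
  push_cast
  simp only [mul_add, Finset.sum_add_distrib]
  ring

lemma mFourier_tmk {n : ℕ} (ν : Fin n → ℤ) (x : Fin n → ℝ) :
    UnitAddTorus.mFourier ν (tmk x) = eC (∑ i, (ν i : ℝ) * x i) := by
  simp only [UnitAddTorus.mFourier, ContinuousMap.coe_mk, tmk, fourier_coe_apply, eC]
  rw [← Complex.exp_sum]
  congr 1
  push_cast
  rw [Finset.mul_sum]
  refine Finset.sum_congr rfl fun i _ => ?_
  ring

lemma mFourierCoeff_tlift {n : ℕ} {f : (Fin n → ℝ) → ℂ} (hf : IsPeriodic f) (ν : Fin n → ℤ) :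
    UnitAddTorus.mFourierCoeff (tlift f) ν = fourierCoeffT f ν := by
  rw [UnitAddTorus.mFourierCoeff_eq_integral _ _ (fun _ => -(1/2:ℝ)), fourierCoeffT,
    ← setIntegral_congr_set (ioBox_ae_box n)]
  refine integral_congr_ae (Filter.Eventually.of_forall fun x => ?_)
  have h1 := mFourier_tmk (-ν) x
  have h2 := tlift_tmk hf x
  show (UnitAddTorus.mFourier (-ν)) (fun i => (x i : UnitAddCircle)) *
    tlift f (fun i => (x i : UnitAddCircle)) = _
  unfold tmk at h1 h2
  rw [h1, h2, mul_comm]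
  simp

lemma hasSum_fourier {n : ℕ} {f : (Fin n → ℝ) → ℂ} (hf : IsPeriodic f) (hc : Continuous f)
    (hs : Summable (fourierCoeffT f)) (x : Fin n → ℝ) :
    HasSum (fun ν => fourierCoeffT f ν * eC (∑ i, (ν i : ℝ) * x i)) (f x) := by
  have e : UnitAddTorus.mFourierCoeff (⟨tlift f, tlift_continuous hf hc⟩ : C(UnitAddTorus (Fin n), ℂ))
      = fourierCoeffT f := funext (mFourierCoeff_tlift hf)
  have := UnitAddTorus.hasSum_mFourier_series_apply_of_summable
    (f := ⟨tlift f, tlift_continuous hf hc⟩) (by rw [e]; exact hs) (tmk x)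
  rw [e] at this
  simpa [mFourier_tmk, tlift_tmk hf] using this

noncomputable def kap (r t : ℝ) : ℝ := r⁻¹ * max 0 (1 - |t| / r)

noncomputable def kapHat (r ξ : ℝ) : ℝ :=
  if ξ = 0 then 1 else (2 - 2 * Real.cos (2 * Real.pi * ξ * r)) / (r * (2 * Real.pi * ξ)) ^ 2

lemma kap_continuous (r : ℝ) : Continuous (kap r) := by
  unfold kap; fun_prop

lemma kap_nonneg {r : ℝ} (hr : 0 < r) (t : ℝ) : 0 ≤ kap r t :=
  mul_nonneg (inv_nonneg.2 hr.le) (le_max_left _ _)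

lemma kap_le {r : ℝ} (hr : 0 < r) (t : ℝ) : kap r t ≤ r⁻¹ := by
  unfold kap
  have : max 0 (1 - |t| / r) ≤ 1 := max_le (by norm_num) (by
    have : 0 ≤ |t| / r := by positivity
    linarith)
  exact mul_le_of_le_one_right (inv_nonneg.2 hr.le) this

lemma kap_zero {r : ℝ} (hr : 0 < r) {t : ℝ} (ht : r ≤ |t|) : kap r t = 0 := by
  unfold kap
  have : 1 ≤ |t| / r := (one_le_div hr).2 ht
  rw [max_eq_left (by linarith), mul_zero]

lemma kap_neg (r t : ℝ) : kap r (-t) = kap r t := by simp [kap]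

lemma kapHat_nonneg (r ξ : ℝ) : 0 ≤ kapHat r ξ := by
  unfold kapHat
  split_ifs
  · norm_num
  · have := Real.cos_le_one (2 * Real.pi * ξ * r)
    exact div_nonneg (by linarith) (by positivity)

lemma kapHat_zero (r : ℝ) : kapHat r 0 = 1 := by simp [kapHat]

lemma kapHat_le {r ξ : ℝ} (hr : 0 < r) (hξ : ξ ≠ 0) : kapHat r ξ ≤ (r ^ 2)⁻¹ * (ξ ^ 2)⁻¹ := by
  unfold kapHat
  rw [if_neg hξ, ← mul_inv, div_le_iff₀ (by positivity)]
  have h1 := Real.neg_one_le_cos (2 * Real.pi * ξ * r)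
  have h2 : (r ^ 2 * ξ ^ 2)⁻¹ * (r * (2 * Real.pi * ξ)) ^ 2 = 4 * Real.pi ^ 2 := by
    field_simp; norm_num
  rw [h2]
  nlinarith [Real.pi_gt_three]

lemma hasDerivAt_cexp (w : ℂ) (t : ℝ) :
    HasDerivAt (fun t : ℝ => Complex.exp (-w * t)) (Complex.exp (-w * t) * (-w)) t := by
  have h0 : HasDerivAt (fun t : ℝ => (t : ℂ)) 1 t := Complex.ofRealCLM.hasDerivAt
  have h := (h0.const_mul (-w)).cexp
  simpa using h

lemma tent_int_pos {r : ℝ} (hr : 0 < r) {w : ℂ} (hw : w ≠ 0) :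
    ∫ t in (0:ℝ)..r, (1 - (t:ℂ) / r) * Complex.exp (-w * t)
      = Complex.exp (-w * r) / (r * w ^ 2) + 1 / w - 1 / (r * w ^ 2) := by
  have hrc : (r : ℂ) ≠ 0 := by exact_mod_cast hr.ne'
  have h0 : ∀ t : ℝ, HasDerivAt (fun t : ℝ => (t : ℂ)) 1 t := fun t => Complex.ofRealCLM.hasDerivAt
  have hd : ∀ t ∈ Set.uIcc (0:ℝ) r, HasDerivAt
      (fun t : ℝ => Complex.exp (-w * t) * (-(1 - (t:ℂ) / r) / w + 1 / (r * w ^ 2)))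
      ((1 - (t:ℂ) / r) * Complex.exp (-w * t)) t := by
    intro t _
    have h1 := (((((h0 t).div_const (r:ℂ)).const_sub 1).neg.div_const w).add_const (1 / (r * w ^ 2)))
    convert! (hasDerivAt_cexp w t).mul h1 using 1
    simp only [Pi.neg_apply]
    field_simp
    ring
  rw [intervalIntegral.integral_eq_sub_of_hasDerivAt hd (Continuous.intervalIntegrable (by fun_prop) _ _)]
  simp only [ofReal_zero, mul_zero, Complex.exp_zero, zero_div, div_self hrc]
  field_simp
  ring

lemma tent_int_neg {r : ℝ} (hr : 0 < r) {w : ℂ} (hw : w ≠ 0) :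
    ∫ t in (-r:ℝ)..0, (1 + (t:ℂ) / r) * Complex.exp (-w * t)
      = Complex.exp (w * r) / (r * w ^ 2) - 1 / w - 1 / (r * w ^ 2) := by
  have h := tent_int_pos hr (neg_ne_zero.2 hw)
  have h2 := intervalIntegral.integral_comp_neg (a := -r) (b := 0)
    (fun t : ℝ => (1 - (t:ℂ) / r) * Complex.exp (-(-w) * t))
  simp only [neg_zero, neg_neg] at h2 h
  rw [h] at h2
  have e : ∀ t : ℝ, (1 + (t:ℂ) / r) * Complex.exp (-w * t)
      = (1 - ((-t : ℝ):ℂ) / r) * Complex.exp (w * ((-t : ℝ) : ℂ)) := by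
    intro t; push_cast; ring_nf
  simp only [e]
  rw [h2]
  rw [neg_sq, div_neg]; ring

lemma tent_int_zero {r : ℝ} (hr : 0 < r) :
    ∫ t in (0:ℝ)..r, (1 - (t:ℂ) / r) = r / 2 := by
  have hrc : (r : ℂ) ≠ 0 := by exact_mod_cast hr.ne'
  have h0 : ∀ t : ℝ, HasDerivAt (fun t : ℝ => (t : ℂ)) 1 t := fun t => Complex.ofRealCLM.hasDerivAt
  have hd : ∀ t ∈ Set.uIcc (0:ℝ) r, HasDerivAt
      (fun t : ℝ => (t:ℂ) - (t:ℂ) ^ 2 / (2 * r)) ((1 - (t:ℂ) / r)) t := by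
    intro t _
    convert! (h0 t).sub (((h0 t).pow 2).div_const (2 * (r:ℂ))) using 1
    field_simp
    norm_num
    ring
  rw [intervalIntegral.integral_eq_sub_of_hasDerivAt hd (Continuous.intervalIntegrable (by fun_prop) _ _)]
  simp
  field_simp
  ring

lemma eC_continuous : Continuous eC := by unfold eC; fun_prop

lemma eC_add (a b : ℝ) : eC (a + b) = eC a * eC b := by
  simp only [eC]
  rw [← Complex.exp_add]; congr 1; push_cast; ring

lemma eC_zero : eC 0 = 1 := by simp [eC]

lemma norm_eC (a : ℝ) : ‖eC a‖ = 1 := by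
  rw [eC, show (2 * Real.pi * I * a : ℂ) = ((2 * Real.pi * a : ℝ) : ℂ) * I by push_cast; ring]
  exact Complex.norm_exp_ofReal_mul_I _

lemma conj_eC (a : ℝ) : (starRingEnd ℂ) (eC a) = eC (-a) := by
  simp only [eC]
  rw [← Complex.exp_conj]
  congr 1
  have h2 : (starRingEnd ℂ) 2 = 2 := map_ofNat _ 2
  simp [h2]

lemma eC_sum {ι : Type*} (s : Finset ι) (g : ι → ℝ) : eC (∑ i ∈ s, g i) = ∏ i ∈ s, eC (g i) := by
  simp only [eC]
  rw [← Complex.exp_sum, ofReal_sum, Finset.mul_sum]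

lemma tent_fourier {r : ℝ} (hr : 0 < r) (ξ : ℝ) :
    ∫ t, (kap r t : ℂ) * eC (-(ξ * t)) = kapHat r ξ := by
  have hrc : (r : ℂ) ≠ 0 := by exact_mod_cast hr.ne'
  have hc : Continuous (fun t => (kap r t : ℂ) * eC (-(ξ * t))) :=
    (continuous_ofReal.comp (kap_continuous r)).mul (eC_continuous.comp (by fun_prop))
  have h1 : ∫ t, (kap r t : ℂ) * eC (-(ξ * t)) = ∫ t in (-r)..r, (kap r t : ℂ) * eC (-(ξ * t)) := by
    rw [intervalIntegral.integral_of_le (by linarith)]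
    symm
    apply setIntegral_eq_integral_of_forall_compl_eq_zero
    intro t ht
    have : r ≤ |t| := by
      rw [mem_Ioc, not_and_or, not_lt, not_le] at ht
      rcases ht with h | h
      · exact le_trans (by linarith) (neg_le_abs t)
      · exact le_trans h.le (le_abs_self t)
    rw [kap_zero hr this]; simp
  rw [h1, ← intervalIntegral.integral_add_adjacent_intervals (b := 0)
    (hc.intervalIntegrable _ _) (hc.intervalIntegrable _ _)]
  set w : ℂ := 2 * Real.pi * I * ξ with hw
  have e1 : ∫ t in (-r)..0, (kap r t : ℂ) * eC (-(ξ * t))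
      = (r:ℂ)⁻¹ * ∫ t in (-r)..0, (1 + (t:ℂ) / r) * Complex.exp (-w * t) := by
    rw [← intervalIntegral.integral_const_mul]
    apply intervalIntegral.integral_congr
    intro t ht
    rw [uIcc_of_le (by linarith)] at ht
    have : kap r t = r⁻¹ * (1 + t / r) := by
      unfold kap
      rw [abs_of_nonpos ht.2, max_eq_right]
      · ring
      · have : -t / r ≤ 1 := (div_le_one hr).2 (by linarith [ht.1])
        linarith
    simp only [this, eC, hw]
    push_cast
    ring_nf
  have e2 : ∫ t in (0)..r, (kap r t : ℂ) * eC (-(ξ * t))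
      = (r:ℂ)⁻¹ * ∫ t in (0)..r, (1 - (t:ℂ) / r) * Complex.exp (-w * t) := by
    rw [← intervalIntegral.integral_const_mul]
    apply intervalIntegral.integral_congr
    intro t ht
    rw [uIcc_of_le (by linarith)] at ht
    have : kap r t = r⁻¹ * (1 - t / r) := by
      unfold kap
      rw [abs_of_nonneg ht.1, max_eq_right]
      have : t / r ≤ 1 := (div_le_one hr).2 (by linarith [ht.2])
      linarith
    simp only [this, eC, hw]
    push_cast
    ring_nf
  rw [e1, e2]
  by_cases h : ξ = 0
  · have hw0 : w = 0 := by rw [hw, h]; simp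
    have h2 := intervalIntegral.integral_comp_neg (a := -r) (b := 0)
      (fun t : ℝ => (1 - (t:ℂ) / r))
    simp only [neg_zero, neg_neg, tent_int_zero hr] at h2
    have e : ∀ t : ℝ, (1 + (t:ℂ) / r) = (1 - ((-t : ℝ):ℂ) / r) := by
      intro t; push_cast; ring
    simp only [hw0, neg_zero, zero_mul, Complex.exp_zero, mul_one, tent_int_zero hr]
    simp only [e, h2, h, kapHat_zero]
    push_cast
    field_simp
    norm_num
  · have hpi : (Real.pi : ℂ) ≠ 0 := by exact_mod_cast Real.pi_ne_zero
    have hξ : (ξ : ℂ) ≠ 0 := by exact_mod_cast h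
    have hw0 : w ≠ 0 := by
      rw [hw]; simp [h, Real.pi_ne_zero]
    rw [tent_int_pos hr hw0, tent_int_neg hr hw0, kapHat, if_neg h]
    have hcos : Complex.exp (w * r) + Complex.exp (-w * r)
        = 2 * ((Real.cos (2 * Real.pi * ξ * r) : ℝ) : ℂ) := by
      rw [Complex.ofReal_cos, Complex.two_cos, hw]
      push_cast
      ring_nf
    have hw2 : w ^ 2 = - (2 * Real.pi * ξ) ^ 2 := by
      rw [hw]; ring_nf; rw [I_sq]; ring
    have : (r:ℂ)⁻¹ * (Complex.exp (w * r) / (r * w ^ 2) - 1 / w - 1 / (r * w ^ 2))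
      + (r:ℂ)⁻¹ * (Complex.exp (-w * r) / (r * w ^ 2) + 1 / w - 1 / (r * w ^ 2))
      = (Complex.exp (w * r) + Complex.exp (-w * r) - 2) / (r ^ 2 * w ^ 2) := by
      field_simp
      ring
    rw [this, hcos, hw2]
    push_cast
    field_simp
    ring

/-! The product kernel. -/

noncomputable def KK (n : ℕ) (r : ℝ) (x : Fin n → ℝ) : ℝ := ∏ i, kap r (x i)

lemma KK_continuous (n : ℕ) (r : ℝ) : Continuous (KK n r) := by
  unfold KK
  exact continuous_finsetProd _ fun i _ => (kap_continuous r).comp (continuous_apply i)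

lemma KK_nonneg {n : ℕ} {r : ℝ} (hr : 0 < r) (x : Fin n → ℝ) : 0 ≤ KK n r x :=
  Finset.prod_nonneg fun _ _ => kap_nonneg hr _

lemma KK_le {n : ℕ} {r : ℝ} (hr : 0 < r) (x : Fin n → ℝ) : KK n r x ≤ (r⁻¹) ^ n := by
  have := Finset.prod_le_prod (s := Finset.univ) (f := fun i => kap r (x i)) (g := fun _ => r⁻¹)
    (fun i _ => kap_nonneg hr _) (fun i _ => kap_le hr _)
  simpa [KK] using this

lemma KK_zero {n : ℕ} {r : ℝ} (hr : 0 < r) {x : Fin n → ℝ} (hx : x ∉ Metric.closedBall 0 r) :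
    KK n r x = 0 := by
  rw [mem_closedBall_zero_iff, pi_norm_le_iff_of_nonneg hr.le] at hx
  push Not at hx
  obtain ⟨i, hi⟩ := hx
  exact Finset.prod_eq_zero (Finset.mem_univ i) (kap_zero hr hi.le)

lemma KK_hasCompactSupport {n : ℕ} {r : ℝ} (hr : 0 < r) : HasCompactSupport (KK n r) :=
  HasCompactSupport.intro (isCompact_closedBall 0 r) fun _ hx => KK_zero hr hx

lemma KK_integrable {n : ℕ} {r : ℝ} (hr : 0 < r) : Integrable (KK n r) :=
  (KK_continuous n r).integrable_of_hasCompactSupport (KK_hasCompactSupport hr)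

lemma KK_fourier {n : ℕ} {r : ℝ} (hr : 0 < r) (ξ : Fin n → ℝ) :
    fourierR (fun x => (KK n r x : ℂ)) ξ = ((∏ i, kapHat r (ξ i) : ℝ) : ℂ) := by
  unfold fourierR
  have : ∀ x : Fin n → ℝ, (KK n r x : ℂ) * eC (-(∑ i, ξ i * x i))
      = ∏ i, ((kap r (x i) : ℂ) * eC (-(ξ i * x i))) := by
    intro x
    rw [← Finset.sum_neg_distrib, eC_sum, KK, ofReal_prod, Finset.prod_mul_distrib]
  simp only [this]
  rw [integral_fintype_prod_volume_eq_prod (fun i t => (kap r t : ℂ) * eC (-(ξ i * t)))]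
  simp only [tent_fourier hr]
  push_cast; rfl

lemma KK_integral {n : ℕ} {r : ℝ} (hr : 0 < r) : ∫ x, KK n r x = 1 := by
  have := KK_fourier (n := n) hr 0
  simp only [fourierR, Pi.zero_apply, zero_mul, Finset.sum_const_zero, neg_zero, eC_zero, mul_one,
    kapHat_zero, Finset.prod_const_one, ofReal_one, integral_complex_ofReal] at this
  exact_mod_cast this

lemma summable_pi_prod {n : ℕ} {c : ℤ → ℝ} (h0 : ∀ k, 0 ≤ c k) (hc : Summable c) :
    Summable (fun ν : Fin n → ℤ => ∏ i, c (ν i)) := by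
  classical
  refine summable_of_sum_le (c := (∑' k, c k) ^ n) (fun ν => Finset.prod_nonneg fun i _ => h0 _) ?_
  intro u
  have hsub : u ⊆ Fintype.piFinset (fun i : Fin n => u.image (fun ν => ν i)) := by
    intro ν hν
    rw [Fintype.mem_piFinset]
    exact fun i => Finset.mem_image_of_mem _ hν
  calc ∑ ν ∈ u, ∏ i, c (ν i)
      ≤ ∑ ν ∈ Fintype.piFinset (fun i : Fin n => u.image (fun ν => ν i)), ∏ i, c (ν i) :=
        Finset.sum_le_sum_of_subset_of_nonneg hsub fun ν _ _ => Finset.prod_nonneg fun i _ => h0 _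
    _ = ∏ i : Fin n, ∑ k ∈ u.image (fun ν => ν i), c k := (Finset.prod_univ_sum _ _).symm
    _ ≤ ∏ _i : Fin n, ∑' k, c k := Finset.prod_le_prod
        (fun i _ => Finset.sum_nonneg fun k _ => h0 k)
        (fun i _ => hc.sum_le_tsum _ fun k _ => h0 k)
    _ = (∑' k, c k) ^ n := by simp

lemma summable_kapHat {r : ℝ} (hr : 0 < r) : Summable (fun k : ℤ => kapHat r k) := by
  have h : Summable (fun k : ℤ => (r ^ 2)⁻¹ * (((k:ℝ)) ^ 2)⁻¹) := by
    have := (Real.summable_one_div_int_pow (p := 2)).2 (by norm_num)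
    simp only [one_div] at this
    exact this.mul_left _
  refine Summable.of_norm_bounded_eventually h ?_
  filter_upwards [(Set.finite_singleton (0:ℤ)).compl_mem_cofinite] with k hk
  rw [Real.norm_of_nonneg (kapHat_nonneg _ _)]
  exact kapHat_le hr (by simpa using hk)

lemma exists_adm {n : ℕ} {D : Set (Fin n → ℝ)} {r : ℝ} (hr : 0 < r)
    (hD : Metric.closedBall 0 r ⊆ D) : AdmDel D (fun x => (KK n r x : ℂ)) := by
  refine ⟨continuous_ofReal.comp (KK_continuous n r), (KK_integrable hr).ofReal, ?_, ?_, ?_⟩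
  · intro ξ
    rw [KK_fourier hr]
    exact_mod_cast Finset.prod_nonneg fun i _ => kapHat_nonneg _ _
  · intro x hx
    have h := KK_zero hr fun h => hx (hD h)
    simp [h]
  · rw [KK_fourier hr]; simp [kapHat_zero]

section PosDef
open Filter Topology FourierTransform RealInnerProductSpace Module

variable {V : Type*} [NormedAddCommGroup V] [InnerProductSpace ℝ V]
  [MeasurableSpace V] [BorelSpace V] [FiniteDimensional ℝ V]

lemma posdef_tendsto {f : V → ℂ} (hf : Integrable f) (hc : Continuous f) (v : V) :
    Tendsto (fun (c : ℝ) ↦ (∫ w : V, cexp (- (c:ℂ)⁻¹ * ‖w‖ ^ 2 + 2 * Real.pi * I * ⟪v, w⟫)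
       • (𝓕 f) w)) atTop (𝓝 (f v)) := by
  have B := Real.tendsto_integral_gaussian_smul' hf (v := v) hc.continuousAt
  refine B.congr' ?_
  filter_upwards [Ioi_mem_atTop 0] with c (hc : 0 < c)
  have J : Integrable (fun w : V ↦ cexp (- (c:ℂ)⁻¹ * ‖w‖ ^ 2 + 2 * Real.pi * I * ⟪v, w⟫)) :=
    GaussianFourier.integrable_cexp_neg_mul_sq_norm_add (by simpa) _ _
  have h1 := (VectorFourier.integral_fourierIntegral_smul_eq_flip (L := innerₗ V)
      Real.continuous_fourierChar continuous_inner J hf)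
  have h2 : ∫ w : V, 𝓕 (fun w ↦ cexp (- (c:ℂ)⁻¹ * ‖w‖ ^ 2 + 2 * Real.pi * I * ⟪v, w⟫)) w • f w
      = ∫ w : V, cexp (- (c:ℂ)⁻¹ * ‖w‖ ^ 2 + 2 * Real.pi * I * ⟪v, w⟫) • (𝓕 f) w := by
    simpa using! h1
  rw [← h2]
  congr with w
  rw [fourier_gaussian_innerProductSpace' (by simpa)]
  have e1 : (Real.pi * c : ℂ) = Real.pi / (c:ℂ)⁻¹ := by rw [div_inv_eq_mul]
  have e2 : (-Real.pi ^ 2 * c * ‖v - w‖ ^ 2 : ℂ) = -Real.pi ^ 2 * ‖v - w‖ ^ 2 / (c:ℂ)⁻¹ := by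
    rw [div_inv_eq_mul]; ring
  rw [e1, e2]

lemma posdef_V {f : V → ℂ} (hf : Integrable f) (hc : Continuous f) (hp : ∀ w, 0 ≤ 𝓕 f w) (v : V) :
    ‖f v‖ ≤ (f 0).re := by
  have h1 := (posdef_tendsto hf hc v).norm
  have h2 := (Complex.continuous_re.tendsto _).comp (posdef_tendsto hf hc 0)
  refine le_of_tendsto_of_tendsto h1 h2 ?_
  filter_upwards [Ioi_mem_atTop 0] with c (hc : 0 < c)
  refine (norm_integral_le_integral_norm _).trans (le_of_eq ?_)
  have hn : ∀ w, (𝓕 f) w = ((‖(𝓕 f) w‖ : ℝ) : ℂ) := fun w => Complex.eq_coe_norm_of_nonneg (hp w)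
  have e : ∀ w : V, cexp (- (c:ℂ)⁻¹ * ‖w‖ ^ 2 + 2 * Real.pi * I * ⟪(0:V), w⟫) • (𝓕 f) w
     = ((‖cexp (- (c:ℂ)⁻¹ * ‖w‖ ^ 2 + 2 * Real.pi * I * ⟪v, w⟫) • (𝓕 f) w‖ : ℝ) : ℂ) := by
    intro w
    rw [norm_smul, ofReal_mul, ← hn w, smul_eq_mul, Complex.norm_exp]
    congr 1
    rw [ofReal_exp]
    congr 1
    have : (- (c:ℂ)⁻¹ * ‖w‖ ^ 2 + 2 * Real.pi * I * ⟪v, w⟫)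
      = ((-c⁻¹ * ‖w‖ ^ 2 : ℝ) : ℂ) + ((2 * Real.pi * ⟪v, w⟫ : ℝ) : ℂ) * I := by push_cast; ring
    rw [this, Complex.add_re, Complex.ofReal_re, Complex.re_ofReal_mul]
    simp
  simp only [Function.comp_apply, e]
  rw [integral_complex_ofReal, ofReal_re]

end PosDef

lemma adm_bound {n : ℕ} {h : (Fin n → ℝ) → ℂ} (hc : Continuous h) (hi : Integrable h)
    (hp : ∀ ξ, 0 ≤ fourierR h ξ) (x : Fin n → ℝ) : ‖h x‖ ≤ (h 0).re := by
  have hmp := PiLp.volume_preserving_ofLp (Fin n)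
  have hH : Integrable (fun v : EuclideanSpace ℝ (Fin n) => h (WithLp.ofLp v)) :=
    hmp.integrable_comp_of_integrable hi
  have hHc : Continuous (fun v : EuclideanSpace ℝ (Fin n) => h (WithLp.ofLp v)) :=
    hc.comp (PiLp.continuous_ofLp 2 _)
  have hF : ∀ w : EuclideanSpace ℝ (Fin n), 0 ≤
      FourierTransform.fourier (fun v : EuclideanSpace ℝ (Fin n) => h (WithLp.ofLp v)) w := by
    intro w
    have := hp (WithLp.ofLp w)
    convert! this using 1
    rw [Real.fourier_eq', fourierR,
      ← hmp.integral_comp (MeasurableEquiv.toLp 2 (Fin n → ℝ)).symm.measurableEmbedding]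
    congr 1
    funext v
    rw [smul_eq_mul, mul_comm, eC]
    congr 2
    simp only [PiLp.inner_apply, RCLike.inner_apply, conj_trivial]
    push_cast
    ring
  have := posdef_V hH hHc hF (WithLp.toLp 2 x)
  simpa using this

noncomputable def FF {n : ℕ} (r : ℝ) (f : (Fin n → ℝ) → ℂ) (x : Fin n → ℝ) : ℂ :=
  ∫ y, KK n r y • f (x - y)

lemma FF_periodic {n : ℕ} {r : ℝ} {f : (Fin n → ℝ) → ℂ} (hf : IsPeriodic f) :
    IsPeriodic (FF r f) := by
  intro x ν
  unfold FF
  congr 1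
  funext y
  rw [show x + (fun i => (ν i : ℝ)) - y = (x - y) + (fun i => (ν i : ℝ)) by abel, hf]

lemma FF_continuous {n : ℕ} {r : ℝ} (hr : 0 < r) {f : (Fin n → ℝ) → ℂ} (hf : LocallyIntegrable f) :
    Continuous (FF r f) :=
  HasCompactSupport.continuous_convolution_left (ContinuousLinearMap.lsmul ℝ ℝ)
    (KK_hasCompactSupport hr) (KK_continuous n r) hf

lemma box_trans_norm {n : ℕ} {f : (Fin n → ℝ) → ℂ} (hf : IsPeriodic f) (y : Fin n → ℝ) :
    ∫ x in box n, ‖f (x - y)‖ = ∫ x in box n, ‖f x‖ := by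
  have hp : IsPeriodic (fun x => ((‖f x‖ : ℝ) : ℂ)) := by
    intro x ν
    simp only [hf x ν]
  have := box_trans hp y
  rw [integral_complex_ofReal, integral_complex_ofReal] at this
  exact_mod_cast this

lemma FF_prod_integrable {n : ℕ} {r : ℝ} (hr : 0 < r) {f : (Fin n → ℝ) → ℂ} (hf : IsPeriodic f)
    (hi : IntegrableOn f (box n)) (ν : Fin n → ℤ) :
    Integrable (Function.uncurry (fun x y : Fin n → ℝ =>
      KK n r y • f (x - y) * eC (-(∑ i, (ν i : ℝ) * x i))))
      ((volume.restrict (box n)).prod volume) := by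
  have hl := locallyIntegrable_of_periodic hf hi
  have hm : AEStronglyMeasurable (Function.uncurry (fun x y : Fin n → ℝ =>
      KK n r y • f (x - y) * eC (-(∑ i, (ν i : ℝ) * x i))))
      ((volume.restrict (box n)).prod volume) := by
    have h1 : AEStronglyMeasurable (fun p : (Fin n → ℝ) × (Fin n → ℝ) => KK n r p.2 • f (p.1 - p.2))
        ((volume.restrict (box n)).prod volume) := by
      have := AEStronglyMeasurable.convolution_integrand (μ := (volume : Measure (Fin n → ℝ)))
        (ν := (volume : Measure (Fin n → ℝ)))
        (ContinuousLinearMap.lsmul ℝ ℝ) (KK_continuous n r).aestronglyMeasurable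
        hl.aestronglyMeasurable
      refine AEStronglyMeasurable.mono_measure this ?_
      exact Measure.prod_mono Measure.restrict_le_self le_rfl
    refine h1.mul ?_
    refine Continuous.aestronglyMeasurable ?_
    exact eC_continuous.comp (by fun_prop)
  rw [integrable_prod_iff' hm]
  have hint : ∀ y : Fin n → ℝ, IntegrableOn (fun x => KK n r y • f (x - y)) (box n) :=
    fun y => (integrableOn_trans hf hi y).smul (KK n r y)
  constructor
  · refine Filter.Eventually.of_forall fun y => ?_
    have := (hint y).mul_bdd (c := 1) (g := fun x => eC (-(∑ i, (ν i : ℝ) * x i))) ?_ ?_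
    · exact this
    · exact (eC_continuous.comp (by fun_prop)).aestronglyMeasurable
    · exact Filter.Eventually.of_forall fun x => (norm_eC _).le
  · have : (fun y : Fin n → ℝ => ∫ x in box n, ‖Function.uncurry (fun x y : Fin n → ℝ =>
      KK n r y • f (x - y) * eC (-(∑ i, (ν i : ℝ) * x i))) (x, y)‖) =
      fun y => KK n r y * ∫ x in box n, ‖f x‖ := by
      funext y
      simp only [Function.uncurry, norm_mul, norm_eC, mul_one, norm_smul]
      rw [integral_const_mul, box_trans_norm hf, Real.norm_of_nonneg (KK_nonneg hr y)]
    rw [this]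
    exact (KK_integrable hr).mul_const _

lemma FF_coeff {n : ℕ} {r : ℝ} (hr : 0 < r) {f : (Fin n → ℝ) → ℂ} (hf : IsPeriodic f)
    (hi : IntegrableOn f (box n)) (ν : Fin n → ℤ) :
    fourierCoeffT (FF r f) ν = fourierCoeffT f ν * ((∏ i, kapHat r (ν i) : ℝ) : ℂ) := by
  have e1 : fourierCoeffT (FF r f) ν = ∫ x in box n, ∫ y,
      KK n r y • f (x - y) * eC (-(∑ i, (ν i : ℝ) * x i)) := by
    unfold fourierCoeffT FF
    congr 1
    funext x
    rw [integral_mul_const]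
  rw [e1, integral_integral_swap (FF_prod_integrable hr hf hi ν)]
  have hp : IsPeriodic (fun x => f x * eC (-(∑ i, (ν i : ℝ) * x i))) := by
    intro x k
    have := eC_periodic (-ν) x k
    simp only [Pi.neg_apply, Int.cast_neg, neg_mul, Finset.sum_neg_distrib] at this
    simp only [hf x k, this]
  have e2 : ∀ y : Fin n → ℝ, ∫ x in box n, KK n r y • f (x - y) * eC (-(∑ i, (ν i : ℝ) * x i))
      = fourierCoeffT f ν * ((KK n r y : ℂ) * eC (-(∑ i, (ν i : ℝ) * y i))) := by
    intro y
    have h1 := box_trans hp y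
    rw [fourierCoeffT, ← h1, ← integral_mul_const]
    congr 1
    funext x
    have : eC (-(∑ i, (ν i : ℝ) * x i)) =
        eC (-(∑ i, (ν i : ℝ) * (x - y) i)) * eC (-(∑ i, (ν i : ℝ) * y i)) := by
      rw [← eC_add]
      congr 1
      simp only [Pi.sub_apply, mul_sub, Finset.sum_sub_distrib]
      ring
    rw [this, real_smul]
    ring
  simp_rw [e2]
  rw [integral_const_mul, ← KK_fourier hr, fourierR]

lemma norm_fourierCoeffT_le {n : ℕ} (f : (Fin n → ℝ) → ℂ) (ν : Fin n → ℤ) :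
    ‖fourierCoeffT f ν‖ ≤ ∫ x in box n, ‖f x‖ := by
  refine (norm_integral_le_integral_norm _).trans (le_of_eq ?_)
  simp only [norm_mul, norm_eC, mul_one]

lemma FF_expansion {n : ℕ} {r : ℝ} (hr : 0 < r) {f : (Fin n → ℝ) → ℂ} (hf : IsPeriodic f)
    (hi : IntegrableOn f (box n)) (h0 : ∀ ν, 0 ≤ fourierCoeffT f ν) :
    ∃ c : (Fin n → ℤ) → ℝ, (∀ ν, 0 ≤ c ν) ∧ Summable c ∧
      ∀ x, HasSum (fun ν => (c ν : ℂ) * eC (∑ i, (ν i : ℝ) * x i)) (FF r f x) := by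
  have hk : ∀ ν : Fin n → ℤ, 0 ≤ ∏ i, kapHat r (ν i) :=
    fun ν => Finset.prod_nonneg fun i _ => kapHat_nonneg r _
  have hc : ∀ ν, fourierCoeffT (FF r f) ν =
      ((‖fourierCoeffT f ν‖ * ∏ i, kapHat r (ν i) : ℝ) : ℂ) := by
    intro ν
    rw [FF_coeff hr hf hi, ofReal_mul, ← Complex.eq_coe_norm_of_nonneg (h0 ν)]
  have hs : Summable (fun ν : Fin n → ℤ => ‖fourierCoeffT f ν‖ * ∏ i, kapHat r (ν i)) := by
    refine Summable.of_nonneg_of_le (fun ν => mul_nonneg (norm_nonneg _) (hk ν))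
      (fun ν => mul_le_mul_of_nonneg_right (norm_fourierCoeffT_le f ν) (hk ν)) ?_
    exact (summable_pi_prod (fun k : ℤ => kapHat_nonneg r k) (summable_kapHat hr)).mul_left _
  refine ⟨fun ν => ‖fourierCoeffT f ν‖ * ∏ i, kapHat r (ν i),
    fun ν => mul_nonneg (norm_nonneg _) (hk ν), hs, fun x => ?_⟩
  have := hasSum_fourier (FF_periodic hf (r := r))
    (FF_continuous hr (locallyIntegrable_of_periodic hf hi)) ?_ x
  · simpa only [hc] using this
  · simp only [funext hc]
    exact_mod_cast hs

lemma volume_box (n : ℕ) : volume (box n) = 1 := by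
  simp [box, Real.volume_Icc_pi]
  norm_num

lemma box_orth {n : ℕ} (k : Fin n → ℤ) :
    ∫ x in box n, eC (-(∑ i, (k i : ℝ) * x i)) = if k = 0 then 1 else 0 := by
  split_ifs with hk
  · subst hk
    simp [eC_zero, volume_box, Measure.real]
  · obtain ⟨j, hj⟩ : ∃ j, k j ≠ 0 := by
      by_contra hcon
      push Not at hcon
      exact hk (funext hcon)
    have hj' : (k j : ℝ) ≠ 0 := by exact_mod_cast hj
    have hp := eC_periodic (-k)
    have h := box_trans hp (Pi.single j (1 / (2 * (k j : ℝ))))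
    have e : ∀ x : Fin n → ℝ,
        eC (∑ i, (((-k) i : ℤ) : ℝ) * (x - Pi.single j (1 / (2 * (k j : ℝ))) : Fin n → ℝ) i)
        = - eC (∑ i, (((-k) i : ℤ) : ℝ) * x i) := by
      intro x
      have : (∑ i, (((-k) i : ℤ) : ℝ) * (x - Pi.single j (1 / (2 * (k j : ℝ))) : Fin n → ℝ) i)
         = (∑ i, (((-k) i : ℤ) : ℝ) * x i) + 1 / 2 := by
        simp only [Pi.sub_apply, mul_sub, Finset.sum_sub_distrib, Pi.single_apply, mul_ite, mul_zero,
          Finset.sum_ite_eq', Finset.mem_univ, if_true, Pi.neg_apply, Int.cast_neg]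
        field_simp
        ring
      rw [this, eC_add]
      have : eC (1 / 2) = -1 := by
        unfold eC
        rw [← Complex.exp_pi_mul_I]
        congr 1
        push_cast
        ring
      rw [this]; ring
    simp only [e] at h
    rw [integral_neg] at h
    have h2 : ∫ x in box n, eC (∑ i, (((-k) i : ℤ) : ℝ) * x i) = 0 := by
      linear_combination (-1/2) * h
    simpa using h2

lemma hasSum_mul_norm {ι : Type*} {a b : ι → ℂ} {s t : ℂ} (ha : HasSum a s) (hb : HasSum b t)
    (ha' : Summable (fun i => ‖a i‖)) (hb' : Summable (fun i => ‖b i‖)) :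
    HasSum (fun p : ι × ι => a p.1 * b p.2) (s * t) :=
  ha.mul hb (summable_mul_of_summable_norm (R := ℂ) ha' hb')

lemma weight_hasSum {n : ℕ} {c : (Fin n → ℤ) → ℝ} (h0 : ∀ ν, 0 ≤ c ν) (hs : Summable c)
    {F : (Fin n → ℝ) → ℂ} (hF : ∀ x, HasSum (fun ν => (c ν : ℂ) * eC (∑ i, (ν i : ℝ) * x i)) (F x))
    {μ : Measure (Fin n → ℝ)} {w : (Fin n → ℝ) → ℂ} (hw : Integrable w μ) :
    HasSum (fun p : (Fin n → ℤ) × (Fin n → ℤ) => ((c p.1 * c p.2 : ℝ) : ℂ) *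
      ∫ x, w x * eC (-(∑ i, ((p.2 - p.1) i : ℝ) * x i)) ∂μ)
      (∫ x, w x * ((‖F x‖ ^ 2 : ℝ) : ℂ) ∂μ) := by
  have hb : ∀ p : (Fin n → ℤ) × (Fin n → ℤ), Continuous fun x : Fin n → ℝ =>
      eC (-(∑ i, ((p.2 - p.1) i : ℝ) * x i)) := fun p => eC_continuous.comp (by fun_prop)
  have hI : ∀ p : (Fin n → ℤ) × (Fin n → ℤ), Integrable (fun x => ((c p.1 * c p.2 : ℝ) : ℂ) *
      (w x * eC (-(∑ i, ((p.2 - p.1) i : ℝ) * x i)))) μ := by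
    intro p
    refine Integrable.const_mul ?_ _
    exact hw.mul_bdd (c := 1) (hb p).aestronglyMeasurable
      (Filter.Eventually.of_forall fun x => (norm_eC _).le)
  have hS : Summable (fun p : (Fin n → ℤ) × (Fin n → ℤ) => c p.1 * c p.2) :=
    hs.mul_of_nonneg hs h0 h0
  have key := hasSum_integral_of_summable_integral_norm hI (by
    simp only [norm_mul, norm_eC, mul_one]
    simp only [integral_const_mul]
    refine Summable.mul_right _ ?_
    refine hS.congr fun p => ?_
    rw [Complex.norm_real, Real.norm_of_nonneg (mul_nonneg (h0 _) (h0 _))])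
  simp only [integral_const_mul] at key
  have hpt : ∀ x, w x * ((‖F x‖ ^ 2 : ℝ) : ℂ) = ∑' p : (Fin n → ℤ) × (Fin n → ℤ),
      ((c p.1 * c p.2 : ℝ) : ℂ) * (w x * eC (-(∑ i, ((p.2 - p.1) i : ℝ) * x i))) := by
    intro x
    have h1 := hF x
    have h2 : HasSum (fun ν => (c ν : ℂ) * eC (-∑ i, (ν i : ℝ) * x i)) ((starRingEnd ℂ) (F x)) := by
      have := Complex.hasSum_conj'.2 h1
      simpa [conj_eC] using this
    have hn : ∀ a : (Fin n → ℤ) → ℝ, Summable (fun ν => ‖(c ν : ℂ) * eC (a ν)‖) := by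
      intro a
      refine hs.congr fun ν => ?_
      rw [norm_mul, norm_eC, mul_one, Complex.norm_real, Real.norm_of_nonneg (h0 _)]
    have h3 := hasSum_mul_norm h1 h2 (hn fun ν => ∑ i, (ν i : ℝ) * x i)
      (hn fun ν => -∑ i, (ν i : ℝ) * x i)
    have h4 : F x * (starRingEnd ℂ) (F x) = ((‖F x‖ ^ 2 : ℝ) : ℂ) := by
      rw [Complex.mul_conj, Complex.normSq_eq_norm_sq]
    rw [h4] at h3
    rw [← (h3.mul_left (w x)).tsum_eq]
    refine tsum_congr fun p => ?_
    have : eC (-∑ i, ((p.2 - p.1) i : ℝ) * x i) =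
        eC (∑ i, (p.1 i : ℝ) * x i) * eC (-∑ i, (p.2 i : ℝ) * x i) := by
      rw [← eC_add]
      congr 1
      simp only [Pi.sub_apply, Int.cast_sub, sub_mul, Finset.sum_sub_distrib]
      ring
    rw [this]
    push_cast
    ring
  simp only [hpt]
  exact key

lemma positivity_bound {n : ℕ} {c : (Fin n → ℤ) → ℝ} (h0 : ∀ ν, 0 ≤ c ν) (hs : Summable c)
    {F : (Fin n → ℝ) → ℂ} (hF : ∀ x, HasSum (fun ν => (c ν : ℂ) * eC (∑ i, (ν i : ℝ) * x i)) (F x))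
    {h : (Fin n → ℝ) → ℂ} (hi : Integrable h) (hp : ∀ ξ, 0 ≤ fourierR h ξ) (h1 : fourierR h 0 = 1) :
    ∫ x in box n, ‖F x‖ ^ 2 ≤ (∫ x, h x * ((‖F x‖ ^ 2 : ℝ) : ℂ)).re := by
  have A := weight_hasSum h0 hs hF hi
  have B := weight_hasSum h0 hs hF (μ := volume.restrict (box n)) (w := fun _ => 1)
    (by
      have : IntegrableOn (fun _ : Fin n → ℝ => (1:ℂ)) (box n) :=
        integrableOn_const (by simp [volume_box])
      exact this)
  have B' : (∫ x in box n, 1 * ((‖F x‖ ^ 2 : ℝ) : ℂ)).re = ∫ x in box n, ‖F x‖ ^ 2 := by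
    simp only [one_mul]
    rw [integral_complex_ofReal, ofReal_re]
  rw [← B']
  refine hasSum_le ?_ (Complex.hasSum_re B) (Complex.hasSum_re A)
  intro p
  rw [Complex.re_ofReal_mul, Complex.re_ofReal_mul]
  refine mul_le_mul_of_nonneg_left ?_ (mul_nonneg (h0 _) (h0 _))
  have e := hp (fun i => ((p.2 - p.1) i : ℝ))
  have o := box_orth (p.2 - p.1)
  simp only [one_mul]
  rw [o]
  split_ifs with hk
  · have hk' : p.2 = p.1 := sub_eq_zero.mp hk
    have := h1
    unfold fourierR at this
    simp only [Pi.zero_apply, zero_mul] at this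
    simp only [hk', sub_self, Pi.zero_apply, Int.cast_zero, zero_mul, this]
    rfl
  · exact (Complex.le_def.1 e).1

lemma adm_F_bound {n : ℕ} {D : Set (Fin n → ℝ)} (hD : IsCompact D) {h : (Fin n → ℝ) → ℂ}
    (hh : AdmDel D h) {c : (Fin n → ℤ) → ℝ} (h0 : ∀ ν, 0 ≤ c ν) (hs : Summable c)
    {F : (Fin n → ℝ) → ℂ} (hF : ∀ x, HasSum (fun ν => (c ν : ℂ) * eC (∑ i, (ν i : ℝ) * x i)) (F x))
    (hFc : Continuous F) :
    ∫ x in box n, ‖F x‖ ^ 2 ≤ (h 0).re * ∫ x in D, ‖F x‖ ^ 2 := by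
  obtain ⟨hc, hi, hp, hneg, h1⟩ := hh
  refine (positivity_bound h0 hs hF hi hp h1).trans ?_
  have hb : ∀ x, ‖F x‖ ≤ ∑' ν, c ν := by
    intro x
    rw [← (hF x).tsum_eq]
    refine tsum_of_norm_bounded hs.hasSum fun ν => ?_
    rw [norm_mul, norm_eC, mul_one, Complex.norm_real, Real.norm_of_nonneg (h0 ν)]
  have hi2 : Integrable (fun x => h x * ((‖F x‖ ^ 2 : ℝ) : ℂ)) := by
    refine hi.mul_bdd (c := (∑' ν, c ν) ^ 2) ?_ (Filter.Eventually.of_forall fun x => ?_)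
    · exact Continuous.aestronglyMeasurable (by fun_prop)
    · rw [Complex.norm_real, Real.norm_of_nonneg (by positivity)]
      exact pow_le_pow_left₀ (norm_nonneg _) (hb x) 2
  have hre : (∫ x, h x * ((‖F x‖ ^ 2 : ℝ) : ℂ)).re = ∫ x, (h x * ((‖F x‖ ^ 2 : ℝ) : ℂ)).re :=
    (integral_re hi2).symm
  have hi3 : IntegrableOn (fun x => (h 0).re * ‖F x‖ ^ 2) D :=
    ContinuousOn.integrableOn_compact hD (by fun_prop)
  rw [hre, ← integral_const_mul, ← integral_indicator hD.measurableSet]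
  refine integral_mono hi2.re ((integrable_indicator_iff hD.measurableSet).2 hi3) fun x => ?_
  change (h x * ((‖F x‖ ^ 2 : ℝ) : ℂ)).re ≤ _
  rw [Complex.re_mul_ofReal]
  by_cases hx : x ∈ D
  · rw [indicator_of_mem hx]
    refine mul_le_mul_of_nonneg_right ?_ (by positivity)
    exact (Complex.re_le_norm _).trans (adm_bound hc hi hp x)
  · rw [indicator_of_notMem hx]
    exact mul_nonpos_of_nonpos_of_nonneg (Complex.le_def.1 (hneg x hx)).1 (by positivity)

lemma adm_scale {n : ℕ} {D : Set (Fin n → ℝ)} {h : (Fin n → ℝ) → ℂ}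
    (hh : AdmDel D h) {s : ℝ} (hs : 0 < s) :
    AdmDel (s • D) (fun x => (((s ^ n)⁻¹ : ℝ) : ℂ) * h (s⁻¹ • x)) := by
  obtain ⟨hc, hi, hp, hneg, h1⟩ := hh
  have hft : ∀ ξ, fourierR (fun x => (((s ^ n)⁻¹ : ℝ) : ℂ) * h (s⁻¹ • x)) ξ = fourierR h (s • ξ) := by
    intro ξ
    unfold fourierR
    have := Measure.integral_comp_smul (volume : Measure (Fin n → ℝ))
      (fun x => h x * eC (-(∑ i, (s • ξ) i * x i))) s⁻¹
    simp only [mul_assoc]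
    rw [integral_const_mul]
    have e : ∀ x : Fin n → ℝ, (∑ i, (s • ξ) i * (s⁻¹ • x) i) = ∑ i, ξ i * x i := by
      intro x
      refine Finset.sum_congr rfl fun i _ => ?_
      simp only [Pi.smul_apply, smul_eq_mul]
      field_simp
    simp only [e] at this
    rw [this, Module.finrank_fin_fun, abs_of_nonneg (by positivity), real_smul, ← mul_assoc,
      ← ofReal_mul]
    have : (s ^ n)⁻¹ * (s⁻¹ ^ n)⁻¹ = 1 := by
      rw [inv_pow, inv_inv, inv_mul_cancel₀ (by positivity)]
    rw [this]; simp
  refine ⟨by fun_prop, ?_, ?_, ?_, ?_⟩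
  · exact (hi.comp_smul (inv_ne_zero hs.ne')).const_mul _
  · intro ξ; rw [hft]; exact hp _
  · intro x hx
    have : s⁻¹ • x ∉ D := by
      rwa [← Set.mem_smul_set_iff_inv_smul_mem₀ hs.ne']
    refine mul_nonpos_of_nonneg_of_nonpos ?_ (hneg _ this)
    rw [Complex.zero_le_real]
    positivity
  · rw [hft, smul_zero, h1]

lemma adm_pos {n : ℕ} {D : Set (Fin n → ℝ)} {h : (Fin n → ℝ) → ℂ} (hh : AdmDel D h) :
    0 < (h 0).re := by
  obtain ⟨hc, hi, hp, hneg, h1⟩ := hh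
  by_contra hcon
  push Not at hcon
  have : h = 0 := by
    funext x
    have := (adm_bound hc hi hp x).trans hcon
    simpa using this
  rw [this] at h1
  simp [fourierR] at h1

lemma cs_lintegral {α : Type*} [MeasurableSpace α] (μ : Measure α) {k φ : α → ℝ≥0∞}
    (hk : AEMeasurable k μ) (hφ : AEMeasurable φ μ) (h1 : ∫⁻ x, k x ^ 2 ∂μ = 1) :
    (∫⁻ x, k x ^ 2 * φ x ∂μ) ^ 2 ≤ ∫⁻ x, k x ^ 2 * φ x ^ 2 ∂μ := by
  have := ENNReal.lintegral_mul_le_Lp_mul_Lq μ Real.HolderConjugate.two_two hk (hk.mul hφ)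
  simp only [Pi.mul_apply, ENNReal.rpow_ofNat, h1, ENNReal.one_rpow, one_mul, mul_pow] at this
  have e : ∀ x, k x ^ 2 * φ x = k x * (k x * φ x) := fun x => by ring
  simp only [e]
  calc _ ≤ ((∫⁻ x, k x ^ 2 * φ x ^ 2 ∂μ) ^ (1 / 2 : ℝ)) ^ 2 := by gcongr
    _ = _ := by
      rw [← ENNReal.rpow_natCast, ← ENNReal.rpow_mul]
      norm_num

lemma FF_sq_le {n : ℕ} {r : ℝ} (hr : 0 < r) {f : (Fin n → ℝ) → ℂ} (hf : LocallyIntegrable f)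
    (x : Fin n → ℝ) :
    ‖FF r f x‖ₑ ^ 2 ≤ ∫⁻ y, ENNReal.ofReal (KK n r y) * ‖f (x - y)‖ₑ ^ 2 := by
  have hk : ∀ y, ENNReal.ofReal (√(KK n r y)) ^ 2 = ENNReal.ofReal (KK n r y) := by
    intro y
    rw [← ENNReal.ofReal_pow (Real.sqrt_nonneg _), Real.sq_sqrt (KK_nonneg hr y)]
  have h1 : ‖FF r f x‖ₑ ≤ ∫⁻ y, ENNReal.ofReal (√(KK n r y)) ^ 2 * ‖f (x - y)‖ₑ := by
    refine (enorm_integral_le_lintegral_enorm _).trans (le_of_eq ?_)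
    refine lintegral_congr fun y => ?_
    rw [hk, enorm_smul, Real.enorm_of_nonneg (KK_nonneg hr y)]
  have hm : AEMeasurable (fun y => ‖f (x - y)‖ₑ) volume := by
    have := hf.aestronglyMeasurable.comp_quasiMeasurePreserving
      (Measure.measurePreserving_sub_left (volume : Measure (Fin n → ℝ)) x).quasiMeasurePreserving
    exact this.enorm
  have hkm : AEMeasurable (fun y => ENNReal.ofReal (√(KK n r y))) (volume : Measure (Fin n → ℝ)) := by
    exact ((KK_continuous n r).sqrt.measurable.ennreal_ofReal).aemeasurable
  have := cs_lintegral volume hkm hm (by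
    simp only [hk]
    rw [← ofReal_integral_eq_lintegral_ofReal (KK_integrable hr)
      (Filter.Eventually.of_forall (KK_nonneg hr)), KK_integral hr]
    simp)
  simp only [hk] at this h1
  exact (pow_le_pow_left' h1 2).trans this

lemma FF_lintegral_le {n : ℕ} {r : ℝ} (hr : 0 < r) {f : (Fin n → ℝ) → ℂ} (hf : LocallyIntegrable f)
    {S D : Set (Fin n → ℝ)} (hS : MeasurableSet S) (hD : MeasurableSet D)
    (hSD : ∀ x ∈ S, ∀ y ∈ Metric.closedBall (0 : Fin n → ℝ) r, x - y ∈ D) :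
    ∫⁻ x in S, ‖FF r f x‖ₑ ^ 2 ≤ ∫⁻ x in D, ‖f x‖ₑ ^ 2 := by
  refine (lintegral_mono fun x => FF_sq_le hr hf x).trans ?_
  have hKm : Measurable (fun y => ENNReal.ofReal (KK n r y)) := by
    exact (KK_continuous n r).measurable.ennreal_ofReal
  have hm : AEStronglyMeasurable (fun p : (Fin n → ℝ) × (Fin n → ℝ) => f (p.1 - p.2))
      ((volume.restrict S).prod volume) := by
    have := AEStronglyMeasurable.convolution_integrand (μ := (volume : Measure (Fin n → ℝ)))
        (ν := (volume : Measure (Fin n → ℝ))) (f := fun _ => (1:ℝ))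
        (ContinuousLinearMap.lsmul ℝ ℝ) aestronglyMeasurable_const hf.aestronglyMeasurable
    refine AEStronglyMeasurable.mono_measure ?_
      (Measure.prod_mono (μ := volume.restrict S) Measure.restrict_le_self (le_refl volume))
    simpa using this
  rw [lintegral_lintegral_swap]
  · have hone : ∫⁻ y, ENNReal.ofReal (KK n r y) = 1 := by
      rw [← ofReal_integral_eq_lintegral_ofReal (KK_integrable hr)
        (Filter.Eventually.of_forall (KK_nonneg hr)), KK_integral hr]
      simp
    calc _ ≤ ∫⁻ y, ENNReal.ofReal (KK n r y) * ∫⁻ x in D, ‖f x‖ₑ ^ 2 := by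
          refine lintegral_mono fun y => ?_
          dsimp only
          rw [lintegral_const_mul' _ _ ENNReal.ofReal_ne_top]
          by_cases hy : y ∈ Metric.closedBall (0 : Fin n → ℝ) r
          · refine mul_le_mul' le_rfl ?_
            rw [← lintegral_indicator hS, ← lintegral_indicator hD]
            rw [← lintegral_sub_right_eq_self (fun x => D.indicator (fun a => ‖f a‖ₑ ^ 2) x) y]
            refine lintegral_mono fun x => ?_
            by_cases hx : x ∈ S
            · dsimp only
              rw [indicator_of_mem hx, indicator_of_mem (hSD x hx y hy)]
            · simp [indicator_of_notMem hx]
          · rw [KK_zero hr hy]; simp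
      _ = _ := by
          rw [lintegral_mul_const _ hKm, hone, one_mul]
  · exact ((hKm.comp measurable_snd).aemeasurable).mul (hm.enorm.pow_const 2)

open Filter Topology in
lemma FF_tendsto_ae {n : ℕ} {f : (Fin n → ℝ) → ℂ} (hf : LocallyIntegrable f) {r : ℕ → ℝ}
    (hr : ∀ j, 0 < r j) (hr0 : Tendsto r atTop (𝓝 0)) :
    ∀ᵐ x : Fin n → ℝ, Tendsto (fun j => FF (r j) f x) atTop (𝓝 (f x)) := by
  filter_upwards [(Besicovitch.vitaliFamily volume).ae_tendsto_average_norm_sub hf] with x₀ h₀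
  have hsw : ∀ j, FF (r j) f x₀ = ∫ t, KK n (r j) (x₀ - t) • f t := by
    intro j
    unfold FF
    rw [← integral_sub_left_eq_self (fun y => KK n (r j) y • f (x₀ - y)) volume x₀]
    simp
  simp only [hsw]
  have hφ' : Tendsto r atTop (𝓝[>] 0) :=
    tendsto_nhdsWithin_iff.2 ⟨hr0, Eventually.of_forall hr⟩
  have := (h₀.comp (Besicovitch.tendsto_filterAt volume x₀)).comp hφ'
  apply tendsto_integral_smul_of_tendsto_average_norm_sub (2 ^ n) this
  · filter_upwards with i using hf.integrableOn_isCompact (isCompact_closedBall _ _)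
  · apply tendsto_const_nhds.congr (fun i ↦ ?_)
    rw [integral_sub_left_eq_self (fun y => KK n (r i) y) volume x₀, KK_integral (hr i)]
  · filter_upwards with i
    intro x hx
    by_contra hcon
    refine hx (KK_zero (hr i) ?_)
    rw [mem_closedBall_zero_iff, ← dist_eq_norm, dist_comm]
    exact hcon
  · filter_upwards with i x
    rw [abs_of_nonneg (KK_nonneg (hr i) _), Measure.real, Real.volume_pi_closedBall _ (hr i).le,
      ENNReal.toReal_ofReal (by have := hr i; positivity), Fintype.card_fin]
    refine (KK_le (hr i) _).trans (le_of_eq ?_)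
    have := (hr i).ne'
    rw [mul_pow, inv_pow]
    field_simp

lemma exists_ball_sub {n : ℕ} {D : Set (Fin n → ℝ)} (hconv : Convex ℝ D) (hsym : ∀ x ∈ D, -x ∈ D)
    (hint : (interior D).Nonempty) : ∃ ρ > 0, Metric.closedBall (0 : Fin n → ℝ) ρ ⊆ D := by
  obtain ⟨x, hx⟩ := hint
  have h0 : (0 : Fin n → ℝ) ∈ interior D := by
    have := hconv.combo_interior_self_mem_interior (a := 1/2) (b := 1/2) hx
      (hsym x (interior_subset hx)) (by norm_num) (by norm_num) (by norm_num)
    simpa using this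
  exact Metric.nhds_basis_closedBall.mem_iff.1 (mem_interior_iff_mem_nhds.1 h0)

lemma scale_sub {n : ℕ} {D : Set (Fin n → ℝ)} (hconv : Convex ℝ D) {ρ s : ℝ} (hρ : 0 < ρ)
    (hb : Metric.closedBall (0 : Fin n → ℝ) ρ ⊆ D) (hs0 : 0 < s) (hs1 : s < 1) :
    ∀ x ∈ s • D, ∀ y ∈ Metric.closedBall (0 : Fin n → ℝ) ((1 - s) * ρ), x - y ∈ D := by
  intro x hx y hy
  obtain ⟨z, hz, rfl⟩ := hx
  have h1 : 0 < 1 - s := by linarith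
  have hw : (1 - s)⁻¹ • (-y) ∈ D := by
    apply hb
    rw [mem_closedBall_zero_iff] at hy ⊢
    rw [norm_smul, norm_neg, Real.norm_of_nonneg (by positivity), inv_mul_le_iff₀ h1]
    exact hy
  have := hconv hz hw hs0.le h1.le (by ring)
  rw [smul_inv_smul₀ h1.ne'] at this
  simpa [sub_eq_add_neg] using this

open Filter Topology in
lemma main_bound {n : ℕ} {D : Set (Fin n → ℝ)} (hconv : Convex ℝ D) (hcomp : IsCompact D)
    {ρ : ℝ} (hρ : 0 < ρ) (hb : Metric.closedBall (0 : Fin n → ℝ) ρ ⊆ D)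
    {h : (Fin n → ℝ) → ℂ} (hh : AdmDel D h) {f : (Fin n → ℝ) → ℂ} (hf : IsPeriodic f)
    (hi : IntegrableOn f (box n)) (h0 : ∀ ν, 0 ≤ fourierCoeffT f ν) :
    ∫⁻ x in box n, ‖f x‖ₑ ^ 2 ≤ ENNReal.ofReal (h 0).re * ∫⁻ x in D, ‖f x‖ₑ ^ 2 := by
  have hl := locallyIntegrable_of_periodic hf hi
  have hstep : ∀ s : ℝ, 0 < s → s < 1 → ∫⁻ x in box n, ‖FF ((1 - s) * ρ) f x‖ₑ ^ 2 ≤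
      ENNReal.ofReal ((s ^ n)⁻¹ * (h 0).re) * ∫⁻ x in D, ‖f x‖ₑ ^ 2 := by
    intro s hs0 hs1
    have hr : 0 < (1 - s) * ρ := mul_pos (by linarith) hρ
    obtain ⟨c, hc0, hcs, hcF⟩ := FF_expansion hr hf hi h0
    have hFc := FF_continuous hr hl
    have hsD : IsCompact (s • D) := hcomp.smul s
    have key := adm_F_bound hsD (adm_scale hh hs0) hc0 hcs hcF hFc
    have hconvert : ∀ S : Set (Fin n → ℝ), IsCompact S →
        ∫⁻ x in S, ‖FF ((1 - s) * ρ) f x‖ₑ ^ 2 =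
        ENNReal.ofReal (∫ x in S, ‖FF ((1 - s) * ρ) f x‖ ^ 2) := by
      intro S hS
      rw [ofReal_integral_eq_lintegral_ofReal]
      · refine lintegral_congr fun x => ?_
        rw [ENNReal.ofReal_pow (norm_nonneg _), ofReal_norm]
      · exact ContinuousOn.integrableOn_compact hS (by fun_prop)
      · exact Eventually.of_forall fun x => by positivity
    have hle := FF_lintegral_le hr hl hsD.measurableSet hcomp.measurableSet
      (scale_sub hconv hρ hb hs0 hs1)
    have e0 : ((((s ^ n)⁻¹ : ℝ) : ℂ) * h (s⁻¹ • 0)).re = (s ^ n)⁻¹ * (h 0).re := by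
      rw [smul_zero, Complex.re_ofReal_mul]
    rw [e0] at key
    rw [hconvert (box n) isCompact_Icc]
    refine (ENNReal.ofReal_le_ofReal key).trans ?_
    rw [ENNReal.ofReal_mul (mul_nonneg (by positivity) (adm_pos hh).le), ← hconvert _ hsD]
    exact mul_le_mul' le_rfl hle
  let s : ℕ → ℝ := fun j => 1 - 1 / ((j : ℝ) + 2)
  have hs0 : ∀ j, 0 < s j := by
    intro j
    have : 1 / ((j : ℝ) + 2) < 1 := by
      rw [div_lt_one (by positivity)]
      have : (0:ℝ) ≤ j := j.cast_nonneg
      linarith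
    simp only [s]; linarith
  have hs1 : ∀ j, s j < 1 := by
    intro j
    have : 0 < 1 / ((j : ℝ) + 2) := by positivity
    simp only [s]; linarith
  have hst : Tendsto s atTop (𝓝 1) := by
    have h1 : Tendsto (fun j : ℕ => 1 / ((j : ℝ) + 2)) atTop (𝓝 0) := by
      refine tendsto_const_nhds.div_atTop ?_
      exact tendsto_atTop_add_const_right _ _ tendsto_natCast_atTop_atTop
    have h2 := h1.const_sub 1
    rw [sub_zero] at h2
    exact h2
  have hrt : Tendsto (fun j => (1 - s j) * ρ) atTop (𝓝 0) := by
    have := (hst.const_sub 1).mul_const ρ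
    simpa using this
  have hae := FF_tendsto_ae hl (fun j => mul_pos (by linarith [hs1 j]) hρ) hrt
  have hlim : Tendsto (fun j => ENNReal.ofReal (((s j) ^ n)⁻¹ * (h 0).re) *
      ∫⁻ x in D, ‖f x‖ₑ ^ 2) atTop (𝓝 (ENNReal.ofReal (h 0).re * ∫⁻ x in D, ‖f x‖ₑ ^ 2)) := by
    refine ENNReal.Tendsto.mul_const ?_ (Or.inl ?_)
    · refine ENNReal.tendsto_ofReal ?_
      have := ((hst.pow n).inv₀ (by simp)).mul_const (h 0).re
      simpa using this
    · simpa using adm_pos hh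
  calc ∫⁻ x in box n, ‖f x‖ₑ ^ 2
      = ∫⁻ x in box n, liminf (fun j => ‖FF ((1 - s j) * ρ) f x‖ₑ ^ 2) atTop := by
        refine lintegral_congr_ae ?_
        filter_upwards [ae_restrict_of_ae hae] with x hx
        have h2 : Tendsto (fun j => ‖FF ((1 - s j) * ρ) f x‖ₑ ^ 2) atTop (𝓝 (‖f x‖ₑ ^ 2)) :=
          ((ENNReal.continuous_pow 2).tendsto _).comp hx.enorm
        exact h2.liminf_eq.symm
    _ ≤ liminf (fun j => ∫⁻ x in box n, ‖FF ((1 - s j) * ρ) f x‖ₑ ^ 2) atTop := by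
        refine lintegral_liminf_le fun j => ?_
        have := FF_continuous (r := (1 - s j) * ρ) (mul_pos (by linarith [hs1 j]) hρ) hl
        exact this.measurable.enorm.pow_const 2
    _ ≤ liminf (fun j => ENNReal.ofReal (((s j) ^ n)⁻¹ * (h 0).re) *
          ∫⁻ x in D, ‖f x‖ₑ ^ 2) atTop :=
        liminf_le_liminf (Eventually.of_forall fun j => hstep (s j) (hs0 j) (hs1 j))
    _ = _ := hlim.liminf_eq


/-- Wiener–Delsarte bound: `W_n(D) ≤ |D| · A_{ℝⁿ}(D)` for an origin-symmetric convex
body `D` in the torus. -/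
theorem wiener_le_delsarte (n : ℕ) (D : Set (Fin n → ℝ)) (hD : D ⊆ box n)
    (hconv : Convex ℝ D) (hcomp : IsCompact D) (hsym : ∀ x ∈ D, -x ∈ D)
    (hint : (interior D).Nonempty) :
    Wconst n D ≤ (volume D).toReal * ADel n D := by
  obtain ⟨ρ, hρ, hb⟩ := exists_ball_sub hconv hsym hint
  have hvpos : volume D ≠ 0 := (Measure.measure_pos_of_nonempty_interior volume hint).ne'
  have hvfin : volume D ≠ ⊤ := hcomp.measure_lt_top.ne
  have hv : 0 < (volume D).toReal := ENNReal.toReal_pos hvpos hvfin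
  have hmem : ∀ h, AdmDel D h → Wconst n D ≤ (volume D).toReal * (h 0).re := by
    intro h hh
    refine csInf_le ⟨0, ?_⟩ ?_
    · intro C hC
      by_contra hcon
      push Not at hcon
      have hp : IsPeriodic (fun _ : Fin n → ℝ => (1 : ℂ)) := fun x ν => rfl
      have hi : IntegrableOn (fun _ : Fin n → ℝ => (1 : ℂ)) (box n) :=
        integrableOn_const (by simp [volume_box])
      have := hC (fun _ => 1) hp hi (by
        intro ν
        unfold fourierCoeffT
        simp only [one_mul]
        rw [box_orth]
        split_ifs <;> simp)
      rw [ENNReal.ofReal_of_nonpos hcon.le] at this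
      simp [volume_box] at this
    · intro f hf hi h0
      have := main_bound hconv hcomp hρ hb hh hf hi h0
      have e : ENNReal.ofReal ((volume D).toReal * (h 0).re) * (volume D)⁻¹ =
          ENNReal.ofReal (h 0).re := by
        rw [ENNReal.ofReal_mul hv.le, ENNReal.ofReal_toReal hvfin, mul_comm, ← mul_assoc,
          ENNReal.inv_mul_cancel hvpos hvfin, one_mul]
      rw [e]
      exact this
  rw [← div_le_iff₀' hv]
  refine le_csInf ⟨_, _, exists_adm hρ hb, rfl⟩ ?_
  rintro a ⟨h, hh, rfl⟩
  rw [div_le_iff₀' hv]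
  exact hmem h hh
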